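/- arXiv:2410.20500 — 3 statements merged into one kernel-verified Lean document; each statement's English description precedes it below -/
import Mathlib

section
/- Let R be a Noetherian ring, π ∈ R, A a finitely generated R[1/π]-algebra, B a π-adically complete R̂-algebra with π-torsionfree B, C = B[1/π], and j*: A → C an R[1/π]-algebra map. Suppose x₁,…,xₙ ∈ D := A ×_C B are chosen so that their images generate A over R[1/π], their images topologically generate B over R̂, the kernel K of R̂[1/π]⟨x⟩ → C equals I·R̂[1/π]⟨x⟩ where I is the kernel of R[1/π][x] → A, and the kernel J of R̂⟨x⟩ → B equals K ∩ R̂⟨x⟩. Then D is generated as an R-algebra by x₁,…,xₙ. -/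
/-!
Write `P = R[x]`, `S = R̂⟨x⟩` and invert `π` to get `P[1/π]` and `S[1/π]`. Given
`(a, b) ∈ A ×_C B`, lift `a` to `f ∈ P[1/π]` and `b` to `s ∈ S`; the two lifts differ in `S[1/π]`
by an element of `K = I · S[1/π]`. Since `P[1/π]` is `π`-adically dense in `S[1/π]`, so is the
image of `I` in `K`, and therefore the difference is the image of an element of `I` plus that of an
element of `J = K ∩ S`. Correcting `f` and `s` accordingly, they acquire the same image in `S[1/π]`.
As `P / πⁿ → S / πⁿ` is injective for all `n`, `f` then comes from `P`, that is, from a polynomial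
in the `xᵢ` with coefficients in `R`.
-/

section AdicCompletion

variable {R : Type*} [CommRing R] {I : Ideal R}

theorem exists_sub_algebraMap_mem_map_pow (hI : I.FG) (n : ℕ) (s : AdicCompletion I R) :
    ∃ r : R, s - algebraMap R _ r ∈ (I ^ n).map (algebraMap R (AdicCompletion I R)) := by
  obtain ⟨r, hr⟩ := Submodule.Quotient.mk_surjective _ (AdicCompletion.eval I R n s)
  have hker : s - algebraMap R _ r ∈ (AdicCompletion.eval I R n).ker := by
    rw [LinearMap.mem_ker, map_sub, ← hr, sub_eq_zero]
    rfl
  rw [← AdicCompletion.pow_smul_top_eq_ker_eval hI, Ideal.smul_top_eq_map] at hker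
  exact ⟨r, hker⟩

theorem mem_pow_of_algebraMap_mem_map_pow {n : ℕ} {r : R}
    (hr : algebraMap R (AdicCompletion I R) r ∈ (I ^ n).map (algebraMap R _)) : r ∈ I ^ n := by
  have hmap := Ideal.mem_map_of_mem (AdicCompletion.evalₐ I n).toRingHom hr
  have hcomp : (AdicCompletion.evalₐ I n).toRingHom.comp (algebraMap R _) =
      Ideal.Quotient.mk (I ^ n) := (AdicCompletion.evalₐ I n).comp_algebraMap
  rwa [Ideal.map_map, ← RingHom.comp_apply, hcomp, Ideal.map_quotient_self, Ideal.mem_bot,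
    Ideal.Quotient.eq_zero_iff_mem] at hmap

theorem surjective_of_surjective_mk_comp {B : Type*} [CommRing B] (hI : I.FG)
    {φ : AdicCompletion I R →+* B} {J : Ideal B} [IsHausdorff J B]
    (hJ : I.map (φ.comp (algebraMap R _)) = J)
    (hφ : Function.Surjective ((Ideal.Quotient.mk J).comp (φ.comp (algebraMap R _)))) :
    Function.Surjective φ := by
  have hprecomplete :
      IsPrecomplete (I.map (algebraMap R (AdicCompletion I R))) (AdicCompletion I R) :=
    IsPrecomplete.map_algebraMap_iff.2 (AdicCompletion.isAdicComplete hI).toIsPrecomplete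
  rw [← Ideal.map_map] at hJ
  subst hJ
  refine surjective_of_mk_map_comp_surjective (I := I.map (algebraMap R _)) φ fun q => ?_
  obtain ⟨r, hr⟩ := hφ q
  exact ⟨algebraMap R _ r, hr⟩

theorem adjoin_range_mk_eq_top {B σ : Type*} [CommRing B] [Algebra R B]
    [Algebra (AdicCompletion I R) B] [IsScalarTower R (AdicCompletion I R) B] (hI : I.FG)
    {J : Ideal B} (hIJ : I.map (algebraMap R B) ≤ J) {y : σ → B}
    (hy : ∀ b, ∃ b' ∈ Algebra.adjoin (AdicCompletion I R) (Set.range y), b - b' ∈ J) :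
    Algebra.adjoin R (Set.range fun i => Ideal.Quotient.mk J (y i)) = ⊤ := by
  rw [eq_top_iff]
  rintro q -
  obtain ⟨b, rfl⟩ := Ideal.Quotient.mk_surjective q
  obtain ⟨b', hb', hbb'⟩ := hy b
  rw [Ideal.Quotient.eq.2 hbb']
  clear hbb'
  induction hb' using Algebra.adjoin_induction with
  | mem b hb =>
    obtain ⟨i, rfl⟩ := hb
    exact Algebra.subset_adjoin ⟨i, rfl⟩
  | algebraMap s =>
    obtain ⟨r, hr⟩ := exists_sub_algebraMap_mem_map_pow hI 1 s
    have hsr := Ideal.mem_map_of_mem (algebraMap (AdicCompletion I R) B) hr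
    rw [pow_one, Ideal.map_map, ← IsScalarTower.algebraMap_eq, map_sub,
      ← IsScalarTower.algebraMap_apply] at hsr
    rw [Ideal.Quotient.eq.2 (hIJ hsr)]
    exact Subalgebra.algebraMap_mem _ r
  | add b c _ _ hb hc => rw [map_add]; exact add_mem hb hc
  | mul b c _ _ hb hc => rw [map_mul]; exact mul_mem hb hc

theorem exists_pow_dvd_sub_algebraMap (t : R) (n : ℕ) (s : AdicCompletion (Ideal.span {t}) R) :
    ∃ r : R, algebraMap R (AdicCompletion (Ideal.span {t}) R) t ^ n ∣ s - algebraMap R _ r := by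
  simpa only [Ideal.span_singleton_pow, Ideal.map_span, Set.image_singleton, map_pow,
    Ideal.mem_span_singleton] using
    exists_sub_algebraMap_mem_map_pow (Submodule.fg_span_singleton t) n s

theorem pow_dvd_of_algebraMap_pow_dvd (t : R) (n : ℕ) (r : R)
    (h : algebraMap R (AdicCompletion (Ideal.span {t}) R) t ^ n ∣ algebraMap R _ r) :
    t ^ n ∣ r := by
  simp only [← Ideal.mem_span_singleton, ← Ideal.span_singleton_pow]
  apply mem_pow_of_algebraMap_mem_map_pow
  simpa only [Ideal.span_singleton_pow, Ideal.map_span, Set.image_singleton, map_pow,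
    Ideal.mem_span_singleton] using h

end AdicCompletion

section Gluing

variable {P S P' S' : Type*} [CommRing P] [CommRing S] [CommRing P'] [CommRing S']
  [Algebra P S] [Algebra P P'] [Algebra S S'] {t : P} [IsLocalization.Away t P']
  [IsLocalization.Away (algebraMap P S t) S'] {g : P' →+* S'}

theorem exists_eq_map_add_algebraMap_pow_mul
    (hg : ∀ p, g (algebraMap P P' p) = algebraMap S S' (algebraMap P S p))
    (dense : ∀ (n : ℕ) (s : S), ∃ p : P, algebraMap P S t ^ n ∣ s - algebraMap P S p)
    (n : ℕ) (z : S') :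
    ∃ (f : P') (s : S), z = g f + algebraMap S S' (algebraMap P S t ^ n * s) := by
  obtain ⟨m, s, hs⟩ := IsLocalization.Away.surj (algebraMap P S t) z
  obtain ⟨p, q, hq⟩ := dense (m + n) s
  have hu : IsUnit (algebraMap S S' (algebraMap P S t) ^ m) :=
    (IsLocalization.Away.algebraMap_isUnit _).pow m
  obtain ⟨f, hf⟩ := ((IsLocalization.Away.algebraMap_isUnit (S := P') t).pow m).dvd
    (a := algebraMap P P' p)
  refine ⟨f, q, hu.mul_right_cancel ?_⟩
  have hf' := congrArg g hf
  have hq' := congrArg (algebraMap S S') hq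
  simp only [map_mul, map_pow, map_sub, hg] at hf' hq' ⊢
  linear_combination hs + hq' + hf'

theorem exists_eq_map_add_algebraMap_of_mem_map
    (hg : ∀ p, g (algebraMap P P' p) = algebraMap S S' (algebraMap P S p))
    (dense : ∀ (n : ℕ) (s : S), ∃ p : P, algebraMap P S t ^ n ∣ s - algebraMap P S p)
    {I : Ideal P'} {z : S'} (hz : z ∈ I.map g) :
    ∃ i ∈ I, ∃ s : S, z = g i + algebraMap S S' s := by
  induction hz using Submodule.closure_induction with
  | zero => exact ⟨0, I.zero_mem, 0, by simp⟩
  | add z w _ _ hz hw =>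
    obtain ⟨i, hi, s, rfl⟩ := hz
    obtain ⟨k, hk, u, rfl⟩ := hw
    exact ⟨i + k, I.add_mem hi hk, s + u, by simp only [map_add]; ring⟩
  | smul_mem c _ hz =>
    obtain ⟨i, hi, rfl⟩ := hz
    obtain ⟨m, p, hp⟩ := IsLocalization.Away.surj t i
    obtain ⟨f, s, rfl⟩ := exists_eq_map_add_algebraMap_pow_mul hg dense m c
    refine ⟨f * i, I.mul_mem_left f hi, s * algebraMap P S p, ?_⟩
    have hp' := congrArg g hp
    simp only [map_mul, map_pow, hg, smul_eq_mul] at hp' ⊢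
    linear_combination algebraMap S S' s * hp'

theorem exists_algebraMap_eq_of_map_eq_algebraMap
    (hg : ∀ p, g (algebraMap P P' p) = algebraMap S S' (algebraMap P S p))
    (strict : ∀ (n : ℕ) (p : P), algebraMap P S t ^ n ∣ algebraMap P S p → t ^ n ∣ p)
    {f : P'} {s : S} (hfs : g f = algebraMap S S' s) : ∃ p : P, algebraMap P P' p = f := by
  obtain ⟨m, q, hq⟩ := IsLocalization.Away.surj t f
  obtain ⟨l, hl⟩ : ∃ l : ℕ, algebraMap P S t ^ l * algebraMap P S q =
      algebraMap P S t ^ l * (algebraMap P S t ^ m * s) := by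
    refine IsLocalization.Away.exists_of_eq (S := S') _ ?_
    rw [← hg, ← hq, map_mul, map_pow, map_mul, map_pow, hfs, hg, mul_comm]
  obtain ⟨p, hp⟩ := strict (l + m) (t ^ l * q) ⟨s, by rw [map_mul, map_pow, hl]; ring⟩
  have hu : IsUnit (algebraMap P P' t ^ (l + m)) :=
    (IsLocalization.Away.algebraMap_isUnit t).pow _
  refine ⟨p, hu.mul_left_cancel ?_⟩
  calc algebraMap P P' t ^ (l + m) * algebraMap P P' p
      = algebraMap P P' (t ^ l * q) := by rw [hp, map_mul, map_pow]
    _ = algebraMap P P' t ^ (l + m) * f := by rw [map_mul, map_pow, ← hq]; ring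

theorem range_prod_eq_eqLocus {A B C : Type*} [CommRing A] [CommRing B] [CommRing C]
    (hg : ∀ p, g (algebraMap P P' p) = algebraMap S S' (algebraMap P S p))
    (dense : ∀ (n : ℕ) (s : S), ∃ p : P, algebraMap P S t ^ n ∣ s - algebraMap P S p)
    (strict : ∀ (n : ℕ) (p : P), algebraMap P S t ^ n ∣ algebraMap P S p → t ^ n ∣ p)
    {φA : P' →+* A} {φB : S →+* B} {φC : S' →+* C} {j : A →+* C} {κ : B →+* C}
    (hφA : Function.Surjective φA) (hφB : Function.Surjective φB)
    (hφCA : φC.comp g = j.comp φA) (hφCB : φC.comp (algebraMap S S') = κ.comp φB)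
    (hK : RingHom.ker φC ≤ (RingHom.ker φA).map g)
    (hJ : (RingHom.ker φC).comap (algebraMap S S') ≤ RingHom.ker φB) :
    ((φA.comp (algebraMap P P')).prod (φB.comp (algebraMap P S))).range =
      (j.comp (RingHom.fst A B)).eqLocus (κ.comp (RingHom.snd A B)) := by
  have hφCA' (f : P') : φC (g f) = j (φA f) := RingHom.congr_fun hφCA f
  have hφCB' (s : S) : φC (algebraMap S S' s) = κ (φB s) := RingHom.congr_fun hφCB s
  have hφB_eq {s u : S} (h : φC (algebraMap S S' s) = φC (algebraMap S S' u)) : φB s = φB u := by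
    have := hJ (x := s - u) (by simp [RingHom.mem_ker, h])
    rwa [RingHom.mem_ker, map_sub, sub_eq_zero] at this
  apply le_antisymm
  · rintro _ ⟨p, rfl⟩
    change j (φA (algebraMap P P' p)) = κ (φB (algebraMap P S p))
    rw [← hφCA', ← hφCB', hg]
  · rintro ⟨a, b⟩ (hab : j a = κ b)
    obtain ⟨f, rfl⟩ := hφA a
    obtain ⟨s, rfl⟩ := hφB b
    have hdiff : g f - algebraMap S S' s ∈ RingHom.ker φC := by
      rw [RingHom.mem_ker, map_sub, hφCA', hφCB', hab, sub_self]
    obtain ⟨i, hi, u, hu⟩ := exists_eq_map_add_algebraMap_of_mem_map hg dense (hK hdiff)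
    have hcorrected : g (f - i) = algebraMap S S' (s + u) := by
      rw [map_sub, map_add]
      linear_combination hu
    obtain ⟨p, hp⟩ := exists_algebraMap_eq_of_map_eq_algebraMap hg strict hcorrected
    have hpA : φA (algebraMap P P' p) = φA f := by
      rw [hp, map_sub, (RingHom.mem_ker).1 hi, sub_zero]
    have hpB : φB (algebraMap P S p) = φB s :=
      hφB_eq (by rw [← hg, hφCA', hpA, hab, hφCB'])
    exact ⟨p, Prod.ext hpA hpB⟩

end Gluing

theorem isLocalization_away_C_mvPolynomial (σ : Type*) {R : Type*} (R' : Type*) [CommRing R]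
    [CommRing R'] [Algebra R R'] (π : R) [IsLocalization.Away π R'] :
    letI := MvPolynomial.algebraMvPolynomial (R := R) (S := R') (σ := σ)
    IsLocalization.Away (MvPolynomial.C π : MvPolynomial σ R) (MvPolynomial σ R') := by
  let := MvPolynomial.algebraMvPolynomial (R := R) (S := R') (σ := σ)
  have := MvPolynomial.isLocalization (σ := σ) (Submonoid.powers π) R'
  rwa [Submonoid.map_powers] at this

theorem subring_closure_range_union_range_algebraMap {R T σ : Type*} [CommRing R] [CommRing T]
    [Algebra R T] (y : σ → T) :
    Subring.closure (Set.range y ∪ Set.range (algebraMap R T)) =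
      (MvPolynomial.aeval (R := R) y).toRingHom.range := by
  rw [Set.union_comm, ← Algebra.adjoin_eq_ring_closure, Algebra.adjoin_range_eq_range_aeval]
  rfl

/-- The ring `R̂⟨x⟩` of restricted power series in the variables `xᵢ`, `i : σ`, realized as the
`π`-adic completion of the polynomial ring `R[x]`. -/
abbrev RestrictedPowerSeries {R : Type*} [CommRing R] (π : R) (σ : Type*) : Type _ :=
  AdicCompletion (Ideal.span {(MvPolynomial.C π : MvPolynomial σ R)}) (MvPolynomial σ R)

theorem surjective_of_comp_algebraMap_eq_aeval {R B σ : Type*} [CommRing R] {π : R} [CommRing B]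
    [Algebra R B] [IsHausdorff (Ideal.span {algebraMap R B π}) B] {y : σ → B}
    (hy : Algebra.adjoin R
      (Set.range fun i => Ideal.Quotient.mk (Ideal.span {algebraMap R B π}) (y i)) = ⊤)
    {φ : RestrictedPowerSeries π σ →+* B}
    (hφ : φ.comp (algebraMap (MvPolynomial σ R) _) = (MvPolynomial.aeval (R := R) y).toRingHom) :
    Function.Surjective φ := by
  refine surjective_of_surjective_mk_comp (J := Ideal.span {algebraMap R B π})
    (Submodule.fg_span_singleton _) ?_ ?_
  · simp [hφ, Ideal.map_span]
  · rw [Algebra.adjoin_range_eq_range_aeval, AlgHom.range_eq_top] at hy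
    have hmk := MvPolynomial.comp_aeval (R := R) y
      (Ideal.Quotient.mkₐ R (Ideal.span {algebraMap R B π}))
    rw [hφ]
    exact (congrArg (fun ψ : MvPolynomial σ R →ₐ[R] _ => Function.Surjective ψ) hmk).mpr hy

theorem statement10_general {R R' A B C S' σ : Type*} [CommRing R] (π : R)
    [CommRing R'] [Algebra R R'] [IsLocalization.Away π R']
    [CommRing A] [Algebra R A] [Algebra R' A] [IsScalarTower R R' A]
    [CommRing B] [Algebra R B] [IsHausdorff (Ideal.span {algebraMap R B π}) B]
    [CommRing C] (j : A →+* C) (κ : B →+* C) (x : σ → A × B)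
    (hgenA : Algebra.adjoin R' (Set.range fun i => (x i).1) = ⊤)
    (hgenB : Algebra.adjoin R
      (Set.range fun i => Ideal.Quotient.mk (Ideal.span {algebraMap R B π}) (x i).2) = ⊤)
    [CommRing S'] [Algebra (RestrictedPowerSeries π σ) S']
    [IsLocalization.Away
      (algebraMap (MvPolynomial σ R) (RestrictedPowerSeries π σ) (MvPolynomial.C π)) S']
    (g : MvPolynomial σ R' →+* S')
    (hg : g.comp (MvPolynomial.map (algebraMap R R')) =
      (algebraMap (RestrictedPowerSeries π σ) S').comp (algebraMap (MvPolynomial σ R) _))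
    (φB : RestrictedPowerSeries π σ →+* B)
    (hφB : φB.comp (algebraMap (MvPolynomial σ R) _) =
      (MvPolynomial.aeval (R := R) fun i => (x i).2).toRingHom)
    (φC : S' →+* C)
    (hφCB : φC.comp (algebraMap (RestrictedPowerSeries π σ) S') = κ.comp φB)
    (hφCg : φC.comp g = j.comp (MvPolynomial.aeval (R := R') fun i => (x i).1).toRingHom)
    (hK : RingHom.ker φC ≤
      (RingHom.ker (MvPolynomial.aeval (R := R') fun i => (x i).1).toRingHom).map g)
    (hJ : (RingHom.ker φC).comap (algebraMap (RestrictedPowerSeries π σ) S') ≤ RingHom.ker φB) :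
    Subring.closure (Set.range x ∪ Set.range ((algebraMap R A).prod (algebraMap R B))) =
      (j.comp (RingHom.fst A B)).eqLocus (κ.comp (RingHom.snd A B)) := by
  let := MvPolynomial.algebraMvPolynomial (R := R) (S := R') (σ := σ)
  have := isLocalization_away_C_mvPolynomial σ R' π
  have hφA : Function.Surjective (MvPolynomial.aeval (R := R') fun i => (x i).1).toRingHom := by
    rwa [Algebra.adjoin_range_eq_range_aeval, AlgHom.range_eq_top] at hgenA
  have haeval : (MvPolynomial.aeval (R := R) x).toRingHom =
      ((MvPolynomial.aeval (R := R') fun i => (x i).1).toRingHom.comp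
        (algebraMap (MvPolynomial σ R) _)).prod
      (φB.comp (algebraMap (MvPolynomial σ R) _)) := by
    rw [hφB]
    ext p <;> simp [← IsScalarTower.algebraMap_apply R R' A]
  have hg_apply (p : MvPolynomial σ R) : g (algebraMap (MvPolynomial σ R) (MvPolynomial σ R') p) =
      algebraMap (RestrictedPowerSeries π σ) S' (algebraMap (MvPolynomial σ R) _ p) :=
    RingHom.congr_fun hg p
  have hclosure := subring_closure_range_union_range_algebraMap (R := R) x
  rw [haeval] at hclosure
  have hlift := range_prod_eq_eqLocus (t := MvPolynomial.C π) hg_apply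
    (exists_pow_dvd_sub_algebraMap _) (pow_dvd_of_algebraMap_pow_dvd _)
    hφA (surjective_of_comp_algebraMap_eq_aeval hgenB hφB) hφCg hφCB hK hJ
  exact hclosure.trans hlift

/-- Let `R` be Noetherian, `π ∈ R`, `A` a finitely generated
`R[1/π]`-algebra, `B` a `π`-adically complete, `π`-torsionfree `R̂`-algebra, `C = B[1/π]`, and
`j : A → C` an `R[1/π]`-algebra map. Let `D = A ×_C B` and suppose `x₁, …, xₙ ∈ D` are such
that: their images generate `A` over `R[1/π]`; their images topologically generate `B` over
`R̂`; the kernel `K` of `R̂[1/π]⟨x⟩ → C` equals `I·R̂[1/π]⟨x⟩`, where `I` is the kernel of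
`R[1/π][x] → A`; and the kernel `J` of `R̂⟨x⟩ → B` equals `K ∩ R̂⟨x⟩`. Then `D` is generated
as an `R`-algebra by `x₁, …, xₙ`. Here `R̂⟨x⟩` is realized as the `π`-adic completion `Phat` of
`P = R[x₁,…,xₙ]`, and `R̂[1/π]⟨x⟩` as `Phatπ = Phat[1/π]`; the evaluation maps
`φB : R̂⟨x⟩ → B`, `φC : R̂[1/π]⟨x⟩ → C` and `g : R[1/π][x] → R̂[1/π]⟨x⟩` are given as data,
characterized by their compatibility with the canonical maps from `P`. -/
theorem statement10 (R : Type*) [CommRing R] [IsNoetherianRing R] (π : R)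
    (A : Type*) [CommRing A] [Algebra R A] [Algebra (Localization.Away π) A]
    [IsScalarTower R (Localization.Away π) A]
    (B : Type*) [CommRing B] [Algebra R B]
    [Algebra (AdicCompletion (Ideal.span {π}) R) B]
    [IsScalarTower R (AdicCompletion (Ideal.span {π}) R) B]
    (hBcomplete : IsAdicComplete (Ideal.span {algebraMap R B π}) B)
    (hBtf : Function.Injective (fun b : B => algebraMap R B π * b))
    -- C = B[1/π]
    (j : A →+* Localization.Away (algebraMap R B π))
    (hj : ∀ r : R, j (algebraMap R A r)
      = algebraMap B (Localization.Away (algebraMap R B π)) (algebraMap R B r))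
    -- D = A ×_C B as a subring of A × B
    (n : ℕ)
    (x : Fin n → ((j.comp (RingHom.fst A B)).eqLocus
      ((algebraMap B (Localization.Away (algebraMap R B π))).comp (RingHom.snd A B))))
    -- (1) the images of the `x i` generate `A` over `R[1/π]`
    (hgenA : Algebra.adjoin (Localization.Away π)
      (Set.range fun i => ((x i : A × B).1)) = ⊤)
    -- (2) the images of the `x i` topologically generate `B` over `R̂`
    (hgenB : ∀ (b : B) (k : ℕ),
      ∃ b' ∈ Algebra.adjoin (AdicCompletion (Ideal.span {π}) R)
        (Set.range fun i => ((x i : A × B).2)),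
        b - b' ∈ Ideal.span {algebraMap R B π} ^ k)
    -- the maps from restricted power series, given as data
    (g : MvPolynomial (Fin n) (Localization.Away π) →+*
      Localization.Away (algebraMap (MvPolynomial (Fin n) R)
        (AdicCompletion (Ideal.span {(MvPolynomial.C π : MvPolynomial (Fin n) R)})
          (MvPolynomial (Fin n) R)) (MvPolynomial.C π)))
    (hg : g.comp (MvPolynomial.map (algebraMap R (Localization.Away π)))
      = (algebraMap _ _).comp (algebraMap (MvPolynomial (Fin n) R)
          (AdicCompletion (Ideal.span {(MvPolynomial.C π : MvPolynomial (Fin n) R)})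
            (MvPolynomial (Fin n) R))))
    (φB : AdicCompletion (Ideal.span {(MvPolynomial.C π : MvPolynomial (Fin n) R)})
        (MvPolynomial (Fin n) R) →+* B)
    (hφB : φB.comp (algebraMap (MvPolynomial (Fin n) R)
        (AdicCompletion (Ideal.span {(MvPolynomial.C π : MvPolynomial (Fin n) R)})
          (MvPolynomial (Fin n) R)))
      = (MvPolynomial.aeval (R := R) (fun i => ((x i : A × B).2))).toRingHom)
    (φC : Localization.Away (algebraMap (MvPolynomial (Fin n) R)
        (AdicCompletion (Ideal.span {(MvPolynomial.C π : MvPolynomial (Fin n) R)})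
          (MvPolynomial (Fin n) R)) (MvPolynomial.C π)) →+*
      Localization.Away (algebraMap R B π))
    (hφCB : φC.comp (algebraMap _ _)
      = (algebraMap B (Localization.Away (algebraMap R B π))).comp φB)
    (hφCg : φC.comp g
      = j.comp (MvPolynomial.aeval (R := Localization.Away π)
          (fun i => ((x i : A × B).1))).toRingHom)
    -- (3) K = I·R̂[1/π]⟨x⟩
    (hK : RingHom.ker φC = Ideal.map g
      (RingHom.ker (MvPolynomial.aeval (R := Localization.Away π)
        (fun i => ((x i : A × B).1))).toRingHom))
    -- (4) J = K ∩ R̂⟨x⟩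
    (hJ : RingHom.ker φB = Ideal.comap (algebraMap _ _) (RingHom.ker φC)) :
    -- conclusion: D is generated as an R-algebra by the `x i`
    Subring.closure
        ((Set.range fun i => (x i : A × B)) ∪
          Set.range ((algebraMap R A).prod (algebraMap R B)))
      = (j.comp (RingHom.fst A B)).eqLocus
          ((algebraMap B (Localization.Away (algebraMap R B π))).comp (RingHom.snd A B)) := by
  have := hBcomplete.toIsHausdorff
  exact statement10_general π j _ (fun i => (x i : A × B)) hgenA
    (adjoin_range_mk_eq_top (Submodule.fg_span_singleton π) (by simp [Ideal.map_span])
      fun b => by simpa only [pow_one] using hgenB b 1) g hg φB hφB φC hφCB hφCg hK.le hJ.ge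
end

section
/- Let A be a Noetherian ring and I = (π) a principal ideal generated by a non-zerodivisor. Then the functor sending a finitely presented A-module M to the triple (M[1/π], M ⊗_A Â, canonical isomorphism over Â[1/π]) is an equivalence from finitely presented A-modules to the category of triples (F, N, ι) where F is a finitely presented A[1/π]-module, N is a finitely presented Â-module, and ι: F ⊗_{A[1/π]} Â[1/π] ≅ N[1/π] is an isomorphism. A quasi-inverse sends (F, N, ι) to the fiber product F ×_{N[1/π]} N. -/
open TensorProduct

/-!
Write `B` for `Â`. It is flat over `A` and `A/π ≃ B/πB`, so a `π`-power torsion module is unchanged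
by `B ⊗_A -`. If `f : M → P` is a localization inverting `π`, then its kernel and cokernel are
`π`-power torsion, and flatness carries them to the kernel and cokernel of `B ⊗ f`. Hence `f` and
`B ⊗ f` have the same kernel and cokernel, which makes the square formed by `M`, `P`, `B ⊗ M` and
`B ⊗ P` both cartesian and cocartesian. Cartesian is full faithfulness; applied to the projection
of a fiber product onto `F`, the two halves say that its base change to `B` is `N`. Finite
presentation descends to the fiber product because `A[1/π]` and `B` are flat and a module vanishing
after both base changes is zero.
-/

section Localization

variable {A : Type*} [CommSemiring A] (S : Submonoid A) {M P F W N : Type*}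
  [AddCommMonoid M] [Module A M] [AddCommMonoid P] [Module A P]
  [AddCommMonoid F] [Module A F] [AddCommMonoid W] [Module A W] [AddCommMonoid N] [Module A N]

theorem isLocalizedModule_lTensor (Q : Type*) [AddCommMonoid Q] [Module A Q] (f : M →ₗ[A] P)
    [IsLocalizedModule S f] : IsLocalizedModule S (f.lTensor Q) := by
  rw [← LinearMap.comm_comp_rTensor_comp_comm_eq]
  have : IsLocalizedModule S (f.rTensor Q) := IsLocalizedModule.rTensor A S f
  infer_instance

theorem bijective_of_isLocalizedModule (f : M →ₗ[A] P) [IsLocalizedModule S f]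
    [IsLocalizedModule S (LinearMap.id : M →ₗ[A] M)] : Function.Bijective f := by
  have h : (IsLocalizedModule.linearEquiv S LinearMap.id f : M →ₗ[A] P) = f :=
    LinearMap.ext (IsLocalizedModule.linearEquiv_apply S LinearMap.id f)
  exact h ▸ (IsLocalizedModule.linearEquiv S LinearMap.id f).bijective

theorem mk_one_bijective_of_isLocalizedModule_id (B : Type*) [CommSemiring B] [Algebra A B] (a : A)
    (C : Type*) [CommSemiring C] [Algebra B C] [IsLocalization.Away (algebraMap A B a) C]
    [IsLocalizedModule (Submonoid.powers a) (LinearMap.id : M →ₗ[A] M)] :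
    Function.Bijective (TensorProduct.mk B C (B ⊗[A] M) 1) := by
  let idB : B ⊗[A] M →ₗ[B] B ⊗[A] M := LinearMap.id
  have hA : IsLocalizedModule (Submonoid.powers a) (LinearMap.id : B ⊗[A] M →ₗ[A] B ⊗[A] M) :=
    LinearMap.lTensor_id (R := A) B M ▸
      isLocalizedModule_lTensor (Submonoid.powers a) B LinearMap.id
  have : IsLocalizedModule (Submonoid.powers a) (idB.restrictScalars A) := hA
  have : IsLocalizedModule (Submonoid.powers (algebraMap A B a)) idB :=
    Algebra.algebraMapSubmonoid_powers (S := B) a ▸ IsLocalizedModule.of_restrictScalars _ idB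
  exact bijective_of_isLocalizedModule (Submonoid.powers (algebraMap A B a)) _

/-- The fiber product `F ×_W N` of `γ : F → W` and `h : N → W`, as a submodule of `F × N`. -/
def fiberProduct (γ : F →ₗ[A] W) (h : N →ₗ[A] W) : Submodule A (F × N) :=
  LinearMap.eqLocus (γ ∘ₗ LinearMap.fst A F N) (h ∘ₗ LinearMap.snd A F N)

namespace fiberProduct

variable (γ : F →ₗ[A] W) (h : N →ₗ[A] W)

/-- The projection `F ×_W N → F`. -/
def fst : fiberProduct γ h →ₗ[A] F :=
  LinearMap.fst A F N ∘ₗ (fiberProduct γ h).subtype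

/-- The projection `F ×_W N → N`. -/
def snd : fiberProduct γ h →ₗ[A] N :=
  LinearMap.snd A F N ∘ₗ (fiberProduct γ h).subtype

theorem apply_fst_eq_apply_snd (q : fiberProduct γ h) : γ (fst γ h q) = h (snd γ h q) :=
  q.2

theorem isLocalizedModule_fst [IsLocalizedModule S h]
    [IsLocalizedModule S (LinearMap.id : F →ₗ[A] F)] : IsLocalizedModule S (fst γ h) where
  map_units := IsLocalizedModule.map_units (LinearMap.id : F →ₗ[A] F)
  surj x := by
    obtain ⟨⟨n, s⟩, hs⟩ := IsLocalizedModule.surj S h (γ x)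
    exact ⟨(⟨(s • x, n), (map_smul γ (s : A) x).trans hs⟩, s), rfl⟩
  exists_of_eq {q q'} hq := by
    have hsnd : h (snd γ h q) = h (snd γ h q') := by
      rw [← apply_fst_eq_apply_snd, ← apply_fst_eq_apply_snd, hq]
    obtain ⟨s, hs⟩ := IsLocalizedModule.exists_of_eq (S := S) hsnd
    exact ⟨s, Subtype.ext (Prod.ext (congrArg (s • ·) hq) hs)⟩

end fiberProduct

end Localization

section Torsion

variable {A : Type*} [CommRing A] (S : Submonoid A) {M P : Type*}
  [AddCommGroup M] [Module A M] [AddCommGroup P] [Module A P]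

theorem isTorsion'_ker_of_isLocalizedModule (f : M →ₗ[A] P) [IsLocalizedModule S f] :
    Module.IsTorsion' (LinearMap.ker f) S := by
  rintro ⟨x, hx⟩
  obtain ⟨s, hs⟩ := (IsLocalizedModule.eq_zero_iff S f).mp hx
  exact ⟨s, Subtype.ext hs⟩

theorem isTorsion'_quotient_range_of_isLocalizedModule (f : M →ₗ[A] P) [IsLocalizedModule S f] :
    Module.IsTorsion' (P ⧸ LinearMap.range f) S := by
  rintro ⟨p⟩
  obtain ⟨⟨m, s⟩, hs⟩ := IsLocalizedModule.surj S f p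
  exact ⟨s, (Submodule.Quotient.mk_eq_zero _).mpr ⟨m, hs.symm⟩⟩

end Torsion

section Descent

variable {A : Type*} [CommRing A] (C : Type*) [CommRing C] [Algebra A C]
  {M P : Type*} [AddCommGroup M] [Module A M] [AddCommGroup P] [Module A P]

theorem exists_fg_subsingleton_tensorProduct_quotient [Module.Finite C (C ⊗[A] M)] :
    ∃ K : Submodule A M, K.FG ∧ Subsingleton (C ⊗[A] (M ⧸ K)) := by
  obtain ⟨s, hs⟩ := Module.Finite.fg_top (R := C) (M := C ⊗[A] M)
  obtain ⟨K, hK, hsK⟩ := exists_finite_submodule_right_of_setFinite (s : Set (C ⊗[A] M))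
    s.finite_toSet
  refine ⟨K, Module.Finite.iff_fg.mp hK, ?_⟩
  have hexact := lTensor_exact C (LinearMap.exact_subtype_mkQ K) K.mkQ_surjective
  have hzero : K.mkQ.baseChange C = 0 :=
    LinearMap.ext_on hs fun z hz => (hexact z).mpr (hsK hz)
  refine subsingleton_of_forall_eq 0 fun q => ?_
  obtain ⟨z, rfl⟩ := LinearMap.lTensor_surjective C K.mkQ_surjective q
  exact LinearMap.congr_fun hzero z

theorem finite_tensorProduct_ker [Module.Flat A C] [Module.Finite A P]
    [Module.FinitePresentation C (C ⊗[A] M)] {f : P →ₗ[A] M} (hf : Function.Surjective f) :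
    Module.Finite C (C ⊗[A] LinearMap.ker f) := by
  have : Module.Finite C (LinearMap.ker (AlgebraTensorModule.lTensor C C f)) :=
    Module.Finite.iff_fg.mpr <|
      Module.FinitePresentation.fg_ker _ (LinearMap.lTensor_surjective C hf)
  exact Module.Finite.equiv (LinearMap.tensorKerEquiv C C f).symm

end Descent

/-- A flat algebra `B` over `A` along which modules can be glued with modules over `A[1/π]`:
the square formed by `A`, `A[1/π]`, `B` and `B[1/π]` is then an affine Beauville–Laszlo square.
An `A`-algebra isomorphism between `A ⧸ π` and `B ⧸ πB` is unique if it exists, so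
`nonempty_algEquiv` says that the canonical map is an isomorphism. -/
structure IsFlatGluing {A : Type*} [CommRing A] (π : A) (B : Type*) [CommRing B] [Algebra A B] :
    Prop where
  flat : Module.Flat A B
  nonempty_algEquiv : Nonempty ((A ⧸ Ideal.span {π}) ≃ₐ[A]
    B ⧸ (Ideal.span {π}).map (algebraMap A B))

theorem isFlatGluing_adicCompletion (A : Type*) [CommRing A] [IsNoetherianRing A] (π : A) :
    IsFlatGluing π (AdicCompletion (Ideal.span {π}) A) where
  flat := inferInstance
  nonempty_algEquiv :=
    ⟨((Ideal.quotientEquivAlgOfEq A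
        (AdicCompletion.ker_evalOneₐ_eq_map _ (Submodule.fg_span_singleton π)).symm).trans
      (Ideal.quotientKerAlgEquivOfSurjective
        (AdicCompletion.evalOneₐ_surjective (Ideal.span {π})))).symm⟩

namespace IsFlatGluing

variable {A B M P : Type*} [CommRing A] [CommRing B] [Algebra A B] {π : A}
  [AddCommGroup M] [Module A M] [AddCommGroup P] [Module A P]

theorem exists_algHom_ker_eq (hB : IsFlatGluing π B) :
    ∃ e : B →ₐ[A] A ⧸ Ideal.span {π}, RingHom.ker e = Ideal.span {algebraMap A B π} := by
  obtain ⟨ε⟩ := hB.nonempty_algEquiv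
  refine ⟨ε.symm.toAlgHom.comp (Ideal.Quotient.mkₐ A _), ?_⟩
  ext b
  simp [RingHom.mem_ker, Ideal.Quotient.eq_zero_iff_mem, Ideal.map_span]

theorem exists_eq_algebraMap_add_pow_mul (hB : IsFlatGluing π B) (n : ℕ) (b : B) :
    ∃ (a : A) (b' : B), b = algebraMap A B a + algebraMap A B (π ^ n) * b' := by
  induction n with
  | zero => exact ⟨0, b, by simp⟩
  | succ n ih =>
    obtain ⟨a, b', rfl⟩ := ih
    obtain ⟨e, he⟩ := hB.exists_algHom_ker_eq
    obtain ⟨a', ha'⟩ := Ideal.Quotient.mk_surjective (e b')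
    have hmem : b' - algebraMap A B a' ∈ RingHom.ker e := by
      rw [RingHom.mem_ker, map_sub, AlgHom.commutes, ← ha', Ideal.Quotient.algebraMap_eq, sub_self]
    obtain ⟨b'', hb''⟩ := Ideal.mem_span_singleton.mp (he ▸ hmem)
    refine ⟨a + π ^ n * a', b'', ?_⟩
    rw [sub_eq_iff_eq_add.mp hb'']
    simp only [map_add, map_mul, map_pow]
    ring

theorem mk_one_injective_of_isTorsionBy (hB : IsFlatGluing π B)
    (hM : Module.IsTorsionBy A M π) : Function.Injective (TensorProduct.mk A B M 1) := by
  obtain ⟨e, -⟩ := hB.exists_algHom_ker_eq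
  let act : (A ⧸ Ideal.span {π}) →ₗ[A] M →ₗ[A] M :=
    (Ideal.span {π}).liftQ (LinearMap.lsmul A M) <|
      (Submodule.span_singleton_le_iff_mem _ _).mpr <| LinearMap.ext fun m => hM (x := m)
  have hact : act 1 = LinearMap.id :=
    (Submodule.liftQ_apply _ _ _).trans (map_one (Module.toModuleEnd A M))
  refine Function.LeftInverse.injective (g := TensorProduct.lift (act ∘ₗ e.toLinearMap)) fun m => ?_
  rw [mk_apply, lift.tmul, LinearMap.comp_apply, AlgHom.toLinearMap_apply, map_one, hact,
    LinearMap.id_apply]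

theorem eq_zero_of_one_tmul_eq_zero_of_smul_eq_zero (hB : IsFlatGluing π B) {x : M}
    (hπx : π • x = 0) (hx : (1 : B) ⊗ₜ[A] x = 0) : x = 0 := by
  have := hB.flat
  let T := Submodule.torsionBy A M π
  have hinj : Function.Injective (T.subtype.lTensor B) :=
    Module.Flat.lTensor_preserves_injective_linearMap _ T.injective_subtype
  have h : (1 : B) ⊗ₜ[A] (⟨x, hπx⟩ : T) = 1 ⊗ₜ[A] 0 := hinj (by simpa using hx)
  exact congrArg Subtype.val
    (hB.mk_one_injective_of_isTorsionBy (Submodule.torsionBy_isTorsionBy π) h)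

theorem eq_zero_of_one_tmul_eq_zero_of_pow_smul_eq_zero (hB : IsFlatGluing π B) {x : M} {n : ℕ}
    (hπx : π ^ n • x = 0) (hx : (1 : B) ⊗ₜ[A] x = 0) : x = 0 := by
  induction n with
  | zero => simpa using hπx
  | succ n ih =>
    refine ih (hB.eq_zero_of_one_tmul_eq_zero_of_smul_eq_zero ?_ ?_)
    · rwa [smul_smul, ← pow_succ']
    · rw [tmul_smul, hx, smul_zero]

theorem mk_one_injective (hB : IsFlatGluing π B)
    (hM : Module.IsTorsion' M (Submonoid.powers π)) :
    Function.Injective (TensorProduct.mk A B M 1) := by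
  refine (injective_iff_map_eq_zero _).mpr fun x hx => ?_
  obtain ⟨n, hn⟩ := (Submodule.isTorsion'_powers_iff π).mp hM x
  exact hB.eq_zero_of_one_tmul_eq_zero_of_pow_smul_eq_zero hn hx

theorem mk_one_surjective (hB : IsFlatGluing π B)
    (hM : Module.IsTorsion' M (Submonoid.powers π)) :
    Function.Surjective (TensorProduct.mk A B M 1) := by
  refine LinearMap.range_eq_top.mp (eq_top_iff.mpr ?_)
  rw [← span_tmul_eq_top, Submodule.span_le]
  rintro _ ⟨b, m, rfl⟩
  obtain ⟨n, hn⟩ := (Submodule.isTorsion'_powers_iff π).mp hM m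
  obtain ⟨a, b', rfl⟩ := hB.exists_eq_algebraMap_add_pow_mul n b
  refine ⟨a • m, ?_⟩
  rw [mk_apply, ← Algebra.smul_def, add_tmul, smul_tmul, hn, tmul_zero, add_zero,
    Algebra.algebraMap_eq_smul_one, smul_tmul]

theorem existsUnique_of_lTensor_eq_one_tmul (hB : IsFlatGluing π B) {f : M →ₗ[A] P}
    (hker : Module.IsTorsion' (LinearMap.ker f) (Submonoid.powers π))
    (hcoker : Module.IsTorsion' (P ⧸ LinearMap.range f) (Submonoid.powers π))
    {p : P} {y : B ⊗[A] M} (h : f.lTensor B y = 1 ⊗ₜ p) :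
    ∃! m : M, f m = p ∧ 1 ⊗ₜ m = y := by
  have := hB.flat
  obtain ⟨m, rfl⟩ : p ∈ LinearMap.range f := by
    rw [← Submodule.Quotient.mk_eq_zero]
    refine (injective_iff_map_eq_zero _).mp (hB.mk_one_injective hcoker) _ ?_
    have hexact := lTensor_exact B (LinearMap.exact_map_mkQ_range f) (Submodule.mkQ_surjective _)
    exact (hexact _).mpr ⟨y, h⟩
  have hexact := Module.Flat.lTensor_exact B (LinearMap.exact_subtype_ker_map f)
  obtain ⟨z, hz⟩ := (hexact (y - 1 ⊗ₜ m)).mp (by rw [map_sub, h, LinearMap.lTensor_tmul, sub_self])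
  obtain ⟨k, rfl⟩ := hB.mk_one_surjective hker z
  have hy : (1 : B) ⊗ₜ[A] (m + k) = y := by
    rw [mk_apply, LinearMap.lTensor_tmul, Submodule.subtype_apply] at hz
    rw [tmul_add, hz, add_sub_cancel]
  refine ⟨m + k, ⟨by simp, hy⟩, fun m' ⟨hfm', hm'⟩ => ?_⟩
  have hd : f (m' - (m + k)) = 0 := by simp [hfm']
  obtain ⟨n, hn⟩ := (Submodule.isTorsion'_powers_iff π).mp hker ⟨_, hd⟩
  exact sub_eq_zero.mp <| hB.eq_zero_of_one_tmul_eq_zero_of_pow_smul_eq_zero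
    (congrArg Subtype.val hn) (by rw [tmul_sub, hm', hy, sub_self])

theorem exists_one_tmul_add_lTensor (hB : IsFlatGluing π B) {f : M →ₗ[A] P}
    (hcoker : Module.IsTorsion' (P ⧸ LinearMap.range f) (Submonoid.powers π)) (w : B ⊗[A] P) :
    ∃ (p : P) (z : B ⊗[A] M), w = 1 ⊗ₜ p + f.lTensor B z := by
  obtain ⟨q, hq⟩ := hB.mk_one_surjective hcoker ((LinearMap.range f).mkQ.lTensor B w)
  obtain ⟨p, rfl⟩ := Submodule.mkQ_surjective _ q
  have hexact := lTensor_exact B (LinearMap.exact_map_mkQ_range f) (Submodule.mkQ_surjective _)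
  obtain ⟨z, hz⟩ := (hexact (w - 1 ⊗ₜ p)).mp <| by
    rw [map_sub, LinearMap.lTensor_tmul, ← hq, mk_apply, sub_self]
  exact ⟨p, z, by rw [hz, add_sub_cancel]⟩

theorem existsUnique_of_map_eq (hB : IsFlatGluing π B) (f : M →ₗ[A] P)
    [IsLocalizedModule (Submonoid.powers π) f] {W : Type*} [AddCommMonoid W] [Module A W]
    (g : B ⊗[A] M →ₗ[A] W) [IsLocalizedModule (Submonoid.powers π) g] {p : P} {y : B ⊗[A] M}
    (h : IsLocalizedModule.map (Submonoid.powers π) f g (TensorProduct.mk A B M 1) p = g y) :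
    ∃! m : M, f m = p ∧ 1 ⊗ₜ m = y := by
  have := isLocalizedModule_lTensor (Submonoid.powers π) B f
  let ε := IsLocalizedModule.linearEquiv (Submonoid.powers π) g (f.lTensor B)
  have hmap : ε.toLinearMap ∘ₗ
      IsLocalizedModule.map (Submonoid.powers π) f g (TensorProduct.mk A B M 1) =
        TensorProduct.mk A B P 1 := by
    refine IsLocalizedModule.linearMap_ext (Submonoid.powers π) f (f.lTensor B) ?_
    ext m
    simp only [ε, LinearMap.comp_apply, LinearEquiv.coe_coe, IsLocalizedModule.map_apply,
      IsLocalizedModule.linearEquiv_apply, mk_apply, LinearMap.lTensor_tmul]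
  refine hB.existsUnique_of_lTensor_eq_one_tmul (isTorsion'_ker_of_isLocalizedModule _ f)
    (isTorsion'_quotient_range_of_isLocalizedModule _ f) ?_
  rw [← IsLocalizedModule.linearEquiv_apply (Submonoid.powers π) g (f.lTensor B) y, ← h]
  exact LinearMap.congr_fun hmap p

theorem injective_localization_prod_one_tmul (hB : IsFlatGluing π B) (f : M →ₗ[A] P)
    [IsLocalizedModule (Submonoid.powers π) f] :
    Function.Injective fun m : M => (f m, (1 : B) ⊗ₜ[A] m) := fun _ m hm =>
  (hB.existsUnique_of_lTensor_eq_one_tmul (isTorsion'_ker_of_isLocalizedModule _ f)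
    (isTorsion'_quotient_range_of_isLocalizedModule _ f) (LinearMap.lTensor_tmul B f 1 m)).unique
    (Prod.ext_iff.mp hm) ⟨rfl, rfl⟩

theorem range_localization_prod_one_tmul (hB : IsFlatGluing π B) (f : M →ₗ[A] P)
    [IsLocalizedModule (Submonoid.powers π) f] {W : Type*} [AddCommMonoid W] [Module A W]
    (g : B ⊗[A] M →ₗ[A] W) [IsLocalizedModule (Submonoid.powers π) g] :
    Set.range (fun m : M => (f m, (1 : B) ⊗ₜ[A] m)) =
      {q | IsLocalizedModule.map (Submonoid.powers π) f g (TensorProduct.mk A B M 1) q.1 =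
        g q.2} := by
  ext ⟨p, y⟩
  constructor
  · rintro ⟨m, hm⟩
    obtain ⟨rfl, rfl⟩ := Prod.ext_iff.mp hm
    exact IsLocalizedModule.map_apply (Submonoid.powers π) f g _ m
  · intro h
    obtain ⟨m, ⟨hp, hy⟩, -⟩ := hB.existsUnique_of_map_eq f g h
    exact ⟨m, Prod.ext hp hy⟩

theorem subsingleton_of_subsingleton_tensorProduct (hB : IsFlatGluing π B)
    [Subsingleton (Localization.Away π ⊗[A] M)] [Subsingleton (B ⊗[A] M)] : Subsingleton M := by
  have htors : Module.IsTorsion' M (Submonoid.powers π) := fun m =>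
    (IsLocalizedModule.eq_zero_iff (Submonoid.powers π)
      (TensorProduct.mk A (Localization.Away π) M 1)).mp (Subsingleton.elim _ _)
  exact (hB.mk_one_injective htors).subsingleton

theorem finite_of_finite_tensorProduct (hB : IsFlatGluing π B)
    [Module.Finite (Localization.Away π) (Localization.Away π ⊗[A] M)]
    [Module.Finite B (B ⊗[A] M)] : Module.Finite A M := by
  obtain ⟨K, hK, _⟩ := exists_fg_subsingleton_tensorProduct_quotient (A := A) (M := M)
    (Localization.Away π)
  obtain ⟨L, hL, _⟩ := exists_fg_subsingleton_tensorProduct_quotient (A := A) (M := M) B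
  have : Subsingleton (Localization.Away π ⊗[A] (M ⧸ K ⊔ L)) :=
    (LinearMap.lTensor_surjective _
      (Submodule.factor_surjective (le_sup_left : K ≤ K ⊔ L))).subsingleton
  have : Subsingleton (B ⊗[A] (M ⧸ K ⊔ L)) :=
    (LinearMap.lTensor_surjective _
      (Submodule.factor_surjective (le_sup_right : L ≤ K ⊔ L))).subsingleton
  have htop : K ⊔ L = ⊤ :=
    Submodule.Quotient.subsingleton_iff.mp hB.subsingleton_of_subsingleton_tensorProduct
  exact ⟨htop ▸ hK.sup hL⟩

theorem finitePresentation_of_finitePresentation_tensorProduct (hB : IsFlatGluing π B)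
    [Module.FinitePresentation (Localization.Away π) (Localization.Away π ⊗[A] M)]
    [Module.FinitePresentation B (B ⊗[A] M)] : Module.FinitePresentation A M := by
  have := hB.flat
  have : Module.Flat A (Localization.Away π) := IsLocalization.flat _ (Submonoid.powers π)
  have : Module.Finite A M := hB.finite_of_finite_tensorProduct
  obtain ⟨n, f, hf⟩ := Module.Finite.exists_fin' A M
  have := finite_tensorProduct_ker (Localization.Away π) hf
  have := finite_tensorProduct_ker B hf
  have : Module.Finite A (LinearMap.ker f) := hB.finite_of_finite_tensorProduct
  exact Module.finitePresentation_of_surjective f hf (Module.Finite.iff_fg.mp this)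

section FiberProduct

variable {F W N : Type*} [AddCommGroup F] [Module A F] [AddCommGroup W] [Module A W] [Module B W]
  [IsScalarTower A B W] [AddCommGroup N] [Module A N] [Module B N] [IsScalarTower A B N]

open fiberProduct

theorem isBaseChange_snd (hB : IsFlatGluing π B) {γ : F →ₗ[A] W}
    (hγ : IsBaseChange B γ) (h : N →ₗ[B] W)
    [IsLocalizedModule (Submonoid.powers π) (fst γ (h.restrictScalars A))] :
    IsBaseChange B (snd γ (h.restrictScalars A)) := by
  set p := fst γ (h.restrictScalars A)
  set σ := (snd γ (h.restrictScalars A)).liftBaseChange B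
  have hker := isTorsion'_ker_of_isLocalizedModule (Submonoid.powers π) p
  have hcoker := isTorsion'_quotient_range_of_isLocalizedModule (Submonoid.powers π) p
  have hcomm (z) : hγ.equiv (p.lTensor B z) = h (σ z) := by
    induction z with
    | zero => simp only [map_zero]
    | add z z' hz hz' => simp only [map_add, hz, hz']
    | tmul b q =>
      rw [LinearMap.lTensor_tmul, hγ.equiv_tmul, LinearMap.liftBaseChange_tmul, map_smul]
      exact congrArg (b • ·) (apply_fst_eq_apply_snd γ (h.restrictScalars A) q)
  change Function.Bijective σ
  constructor
  · refine (injective_iff_map_eq_zero _).mpr fun z hz => ?_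
    have hpz : p.lTensor B z = 1 ⊗ₜ 0 := hγ.equiv.injective <| by
      rw [hcomm, hz, map_zero, tmul_zero, map_zero]
    obtain ⟨q, ⟨hq, rfl⟩, -⟩ := hB.existsUnique_of_lTensor_eq_one_tmul hker hcoker hpz
    rw [LinearMap.liftBaseChange_tmul, one_smul] at hz
    rw [show q = 0 from Subtype.ext (Prod.ext hq hz), tmul_zero]
  · intro y
    obtain ⟨w, hw⟩ := hγ.equiv.surjective (h y)
    obtain ⟨x, z, rfl⟩ := hB.exists_one_tmul_add_lTensor hcoker w
    have hxy : γ x = h (y - σ z) := by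
      rw [map_sub, ← hw, ← hcomm, map_add, add_sub_cancel_right, hγ.equiv_tmul, one_smul]
    refine ⟨1 ⊗ₜ ⟨(x, y - σ z), hxy⟩ + z, ?_⟩
    rw [map_add, LinearMap.liftBaseChange_tmul, one_smul]
    exact sub_add_cancel y (σ z)

theorem finitePresentation_fiberProduct (hB : IsFlatGluing π B) [Module (Localization.Away π) F]
    [IsScalarTower A (Localization.Away π) F] [Module.FinitePresentation (Localization.Away π) F]
    [Module.FinitePresentation B N] {γ : F →ₗ[A] W} (hγ : IsBaseChange B γ) (h : N →ₗ[B] W)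
    [IsLocalizedModule (Submonoid.powers π) (fst γ (h.restrictScalars A))] :
    Module.FinitePresentation A (fiberProduct γ (h.restrictScalars A)) := by
  have hfst : IsBaseChange (Localization.Away π) (fst γ (h.restrictScalars A)) :=
    (isLocalizedModule_iff_isBaseChange (Submonoid.powers π) _ _).mp inferInstance
  have := Module.FinitePresentation.of_equiv hfst.equiv.symm
  have := Module.FinitePresentation.of_equiv (hB.isBaseChange_snd hγ h).equiv.symm
  exact hB.finitePresentation_of_finitePresentation_tensorProduct

end FiberProduct

end IsFlatGluing

theorem statement11_general (A : Type*) [CommRing A] (π : A) (B : Type*) [CommRing B] [Algebra A B]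
    (hB : IsFlatGluing π B) :
    (∀ (M₀ : Type*) [AddCommGroup M₀] [Module A M₀],
      Function.Injective (fun m : M₀ =>
        (LocalizedModule.mkLinearMap (Submonoid.powers π) M₀ m, (1 : B) ⊗ₜ[A] m)) ∧
      Set.range (fun m : M₀ =>
        (LocalizedModule.mkLinearMap (Submonoid.powers π) M₀ m, (1 : B) ⊗ₜ[A] m)) =
        {q : LocalizedModule (Submonoid.powers π) M₀ × (B ⊗[A] M₀) |
          IsLocalizedModule.map (Submonoid.powers π)
            (LocalizedModule.mkLinearMap (Submonoid.powers π) M₀)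
            (LocalizedModule.mkLinearMap (Submonoid.powers π) (B ⊗[A] M₀))
            (TensorProduct.mk A B M₀ 1) q.1 =
          LocalizedModule.mkLinearMap (Submonoid.powers π) (B ⊗[A] M₀) q.2}) ∧
    (∀ (F : Type*) [AddCommGroup F] [Module A F] [Module (Localization.Away π) F]
        [IsScalarTower A (Localization.Away π) F]
        (N : Type*) [AddCommGroup N] [Module A N] [Module B N] [IsScalarTower A B N]
        (ι : (Localization.Away (algebraMap A B π) ⊗[B] (B ⊗[A] F)) ≃ₗ[Localization.Away
          (algebraMap A B π)] (Localization.Away (algebraMap A B π) ⊗[B] N)),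
      ∃ M' : Submodule A (F × N),
        (↑M' : Set (F × N)) = {q : F × N |
          ι ((1 : Localization.Away (algebraMap A B π)) ⊗ₜ[B] ((1 : B) ⊗ₜ[A] q.1)) =
            (1 : Localization.Away (algebraMap A B π)) ⊗ₜ[B] q.2} ∧
        (Module.FinitePresentation (Localization.Away π) F → Module.FinitePresentation B N →
          Module.FinitePresentation A M') ∧
        Function.Bijective
          (LinearMap.liftBaseChange (Localization.Away π)
            ((LinearMap.fst A F N).comp M'.subtype)) ∧
        Function.Bijective
          (LinearMap.liftBaseChange B ((LinearMap.snd A F N).comp M'.subtype))) := by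
  refine ⟨fun M₀ _ _ => ?_, fun F _ _ _ _ N _ _ _ _ ι => ?_⟩
  · let f := LocalizedModule.mkLinearMap (Submonoid.powers π) M₀
    exact ⟨hB.injective_localization_prod_one_tmul f, hB.range_localization_prod_one_tmul f _⟩
  have : IsLocalizedModule (Submonoid.powers π) (LinearMap.id : F →ₗ[A] F) :=
    isLocalizedModule_id (Submonoid.powers π) F (Localization.Away π)
  let e := (LinearEquiv.ofBijective _ (mk_one_bijective_of_isLocalizedModule_id B π
    (Localization.Away (algebraMap A B π)))).trans (ι.restrictScalars B)
  let γ := e.toLinearMap.restrictScalars A ∘ₗ TensorProduct.mk A B F 1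
  have hγ : IsBaseChange B γ := IsBaseChange.of_equiv e fun _ => rfl
  let h := TensorProduct.mk B (Localization.Away (algebraMap A B π)) N 1
  have : IsLocalizedModule (Submonoid.powers (algebraMap A B π)) h := inferInstance
  have := IsLocalizedModule.restrictScalars_powers π h
  have := fiberProduct.isLocalizedModule_fst (Submonoid.powers π) γ (h.restrictScalars A)
  exact ⟨fiberProduct γ (h.restrictScalars A), rfl,
    fun _ _ => hB.finitePresentation_fiberProduct hγ h,
    (isLocalizedModule_iff_isBaseChange (Submonoid.powers π) (Localization.Away π)
      (fiberProduct.fst γ (h.restrictScalars A))).mp inferInstance,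
    hB.isBaseChange_snd hγ h⟩

/-- (Beauville–Laszlo for finitely presented modules.) Let `A` be Noetherian
and `π ∈ A` a non-zerodivisor, `Â` the `π`-adic completion. The functor
`M ↦ (M[1/π], M ⊗_A Â, canonical ι)` from finitely presented `A`-modules to triples
`(F, N, ι)` — `F` a finitely presented `A[1/π]`-module, `N` a finitely presented `Â`-module,
`ι : F ⊗ Â[1/π] ≅ N[1/π]` — is an equivalence, with quasi-inverse `(F, N, ι) ↦ F ×_{N[1/π]} N`.
Concretely: (1) for every finitely presented `A`-module `M₀`, the unit map
`M₀ → M₀[1/π] ×_{(Â ⊗ M₀)[1/π]} (Â ⊗ M₀)` is bijective (full faithfulness via the canonical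
triple); and (2) for every triple `(F, N, ι)`, the fiber product `M` is a finitely presented
`A`-module whose base changes to `A[1/π]` and `Â` recover `F` and `N` (essential surjectivity,
with the fiber product as quasi-inverse). -/
theorem statement11 (A : Type*) [CommRing A] [IsNoetherianRing A]
    (π : A) (hπ : π ∈ nonZeroDivisors A) :
    -- (1) unit of the adjunction is an isomorphism: full faithfulness
    (∀ (M₀ : Type) [AddCommGroup M₀] [Module A M₀] [Module.FinitePresentation A M₀],
      Function.Injective (fun m : M₀ =>
        (LocalizedModule.mkLinearMap (Submonoid.powers π) M₀ m,
          ((1 : AdicCompletion (Ideal.span {π}) A) ⊗ₜ[A] m :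
            AdicCompletion (Ideal.span {π}) A ⊗[A] M₀))) ∧
      Set.range (fun m : M₀ =>
        (LocalizedModule.mkLinearMap (Submonoid.powers π) M₀ m,
          ((1 : AdicCompletion (Ideal.span {π}) A) ⊗ₜ[A] m :
            AdicCompletion (Ideal.span {π}) A ⊗[A] M₀)))
        = {q : LocalizedModule (Submonoid.powers π) M₀ ×
              (AdicCompletion (Ideal.span {π}) A ⊗[A] M₀) |
            IsLocalizedModule.map (Submonoid.powers π)
              (LocalizedModule.mkLinearMap (Submonoid.powers π) M₀)
              (LocalizedModule.mkLinearMap (Submonoid.powers π)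
                (AdicCompletion (Ideal.span {π}) A ⊗[A] M₀))
              ((TensorProduct.mk A (AdicCompletion (Ideal.span {π}) A) M₀) 1) q.1
            = LocalizedModule.mkLinearMap (Submonoid.powers π)
                (AdicCompletion (Ideal.span {π}) A ⊗[A] M₀) q.2}) ∧
    -- (2) essential surjectivity, with the fiber product as quasi-inverse
    (∀ (F : Type) [AddCommGroup F] [Module A F] [Module (Localization.Away π) F]
        [IsScalarTower A (Localization.Away π) F]
        [Module.FinitePresentation (Localization.Away π) F]
        (N : Type) [AddCommGroup N] [Module A N]
        [Module (AdicCompletion (Ideal.span {π}) A) N]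
        [IsScalarTower A (AdicCompletion (Ideal.span {π}) A) N]
        [Module.FinitePresentation (AdicCompletion (Ideal.span {π}) A) N]
        (ι : (Localization.Away
                (algebraMap A (AdicCompletion (Ideal.span {π}) A) π) ⊗[AdicCompletion (Ideal.span {π}) A]
                  (AdicCompletion (Ideal.span {π}) A ⊗[A] F))
              ≃ₗ[Localization.Away (algebraMap A (AdicCompletion (Ideal.span {π}) A) π)]
             (Localization.Away
                (algebraMap A (AdicCompletion (Ideal.span {π}) A) π) ⊗[AdicCompletion (Ideal.span {π}) A] N)),
      ∃ M' : Submodule A (F × N),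
        (↑M' : Set (F × N)) = {q : F × N |
            ι ((1 : Localization.Away (algebraMap A (AdicCompletion (Ideal.span {π}) A) π))
                ⊗ₜ[AdicCompletion (Ideal.span {π}) A]
                  ((1 : AdicCompletion (Ideal.span {π}) A) ⊗ₜ[A] q.1))
              = (1 : Localization.Away (algebraMap A (AdicCompletion (Ideal.span {π}) A) π))
                  ⊗ₜ[AdicCompletion (Ideal.span {π}) A] q.2} ∧
        Module.FinitePresentation A M' ∧
        Function.Bijective
          (LinearMap.liftBaseChange (Localization.Away π)
            ((LinearMap.fst A F N).comp M'.subtype)) ∧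
        Function.Bijective
          (LinearMap.liftBaseChange (AdicCompletion (Ideal.span {π}) A)
            ((LinearMap.snd A F N).comp M'.subtype))) := by
  have h := statement11_general A π _ (isFlatGluing_adicCompletion A π)
  exact ⟨fun M₀ _ _ _ => h.1 M₀, fun F _ _ _ _ _ N _ _ _ _ _ ι =>
    let ⟨M', hM, hfp, h⟩ := h.2 F N ι
    ⟨M', hM, hfp ‹_› ‹_›, h⟩⟩
end

section
/- Let A be a Noetherian ring, π ∈ A a non-zerodivisor, Â the π-adic completion. A finitely generated A-module M is finitely presented projective (i.e., a vector bundle on Spec A) if and only if M[1/π] is a finite projective A[1/π]-module and M ⊗_A Â is a finite projective Â-module. -/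
open TensorProduct

/-!
The `A`-module `Â × A[1/π]` is flat, and it is faithfully so because each residue field `A ⧸ m`
receives a nonzero map from it: from `Â` through `A ⧸ (π)` if `π ∈ m`, and from `A[1/π]` otherwise.
Tensoring with the product is componentwise, so finiteness and flatness over the two factors descend
to `M`; over a Noetherian ring a finite flat module is finitely presented, hence projective.
-/

section Prod

variable {A P Q N N' : Type*} [CommRing A] [AddCommGroup P] [Module A P] [AddCommGroup Q]
  [Module A Q] [AddCommGroup N] [Module A N] [AddCommGroup N'] [Module A N']

lemma lTensor_prod (f : N →ₗ[A] N') :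
    f.lTensor (P × Q) = (TensorProduct.prodLeft A A P Q N').symm.toLinearMap ∘ₗ
      (f.lTensor P).prodMap (f.lTensor Q) ∘ₗ (TensorProduct.prodLeft A A P Q N).toLinearMap :=
  TensorProduct.ext' fun ⟨_, _⟩ _ ↦ by simp

lemma lTensor_prod_injective {f : N →ₗ[A] N'} (hP : Function.Injective (f.lTensor P))
    (hQ : Function.Injective (f.lTensor Q)) : Function.Injective (f.lTensor (P × Q)) := by
  simpa [lTensor_prod, LinearMap.coe_prodMap] using hP.prodMap hQ

lemma lTensor_prod_surjective {f : N →ₗ[A] N'} (hP : Function.Surjective (f.lTensor P))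
    (hQ : Function.Surjective (f.lTensor Q)) : Function.Surjective (f.lTensor (P × Q)) := by
  simpa [lTensor_prod, LinearMap.coe_prodMap] using hP.prodMap hQ

variable (A P Q) in
lemma flat_prod [Module.Flat A P] [Module.Flat A Q] : Module.Flat A (P × Q) := by
  rw [Module.Flat.iff_lTensor_preserves_injective_linearMap]
  intro _ _ _ _ _ _ f hf
  exact lTensor_prod_injective (Module.Flat.lTensor_preserves_injective_linearMap f hf)
    (Module.Flat.lTensor_preserves_injective_linearMap f hf)

end Prod

section Descent

variable {A : Type*} [CommRing A] (P Q B C M : Type*) [AddCommGroup P] [Module A P]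
  [AddCommGroup Q] [Module A Q] [CommRing B] [Algebra A B] [CommRing C] [Algebra A C]
  [AddCommGroup M] [Module A M]

lemma flat_of_flat_tensorProduct [Module.FaithfullyFlat A P] [Module.Flat A (P ⊗[A] M)] :
    Module.Flat A M := by
  rw [Module.Flat.iff_lTensor_preserves_injective_linearMap]
  intro N N' _ _ _ _ f hf
  have hPM : Function.Injective (f.lTensor (P ⊗[A] M)) :=
    Module.Flat.lTensor_preserves_injective_linearMap f hf
  rw [← Module.FaithfullyFlat.lTensor_injective_iff_injective A P]
  simpa [LinearMap.lTensor_tensor] using hPM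

lemma flat_of_flat_tensorProduct_prod [Module.FaithfullyFlat A (P × Q)]
    [Module.Flat A (P ⊗[A] M)] [Module.Flat A (Q ⊗[A] M)] : Module.Flat A M := by
  have : Module.Flat A ((P ⊗[A] M) × (Q ⊗[A] M)) := flat_prod A _ _
  have : Module.Flat A ((P × Q) ⊗[A] M) := .of_linearEquiv (TensorProduct.prodLeft A A P Q M)
  exact flat_of_flat_tensorProduct (P × Q) M

lemma exists_finite_submodule_lTensor_surjective [Module.Finite B (B ⊗[A] M)] :
    ∃ N : Submodule A M, Module.Finite A N ∧ Function.Surjective (N.subtype.lTensor B) := by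
  obtain ⟨s, hs⟩ := Module.Finite.fg_top (R := B) (M := B ⊗[A] M)
  obtain ⟨N, hN, hsN⟩ :=
    TensorProduct.exists_finite_submodule_right_of_setFinite (R := A) _ s.finite_toSet
  refine ⟨N, hN, ?_⟩
  suffices h : Function.Surjective (N.subtype.baseChange B) from h
  rw [← LinearMap.range_eq_top, eq_top_iff, ← hs, Submodule.span_le]
  exact hsN

variable {M} in
lemma lTensor_subtype_surjective_mono {N N' : Submodule A M} (h : N ≤ N')
    (hN : Function.Surjective (N.subtype.lTensor P)) :
    Function.Surjective (N'.subtype.lTensor P) := by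
  rw [← Submodule.subtype_comp_inclusion N N' h, LinearMap.lTensor_comp,
    LinearMap.coe_comp] at hN
  exact hN.of_comp

lemma finite_of_finite_tensorProduct_prod [Module.FaithfullyFlat A (B × C)]
    [Module.Finite B (B ⊗[A] M)] [Module.Finite C (C ⊗[A] M)] : Module.Finite A M := by
  obtain ⟨N₁, _, hN₁⟩ := exists_finite_submodule_lTensor_surjective (A := A) B M
  obtain ⟨N₂, _, hN₂⟩ := exists_finite_submodule_lTensor_surjective (A := A) C M
  have hN : Function.Surjective ((N₁ ⊔ N₂).subtype.lTensor (B × C)) :=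
    lTensor_prod_surjective (lTensor_subtype_surjective_mono B le_sup_left hN₁)
      (lTensor_subtype_surjective_mono C le_sup_right hN₂)
  rw [Module.FaithfullyFlat.lTensor_surjective_iff_surjective] at hN
  exact .of_surjective _ hN

end Descent

lemma faithfullyFlat_of_exists_ne_zero {A P : Type*} [CommRing A] [AddCommGroup P] [Module A P]
    [Module.Flat A P] (h : ∀ m : Ideal A, m.IsMaximal → ∃ f : P →ₗ[A] A ⧸ m, f ≠ 0) :
    Module.FaithfullyFlat A P := by
  refine ⟨fun m hm htop ↦ ?_⟩
  obtain ⟨f, hf⟩ := h m hm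
  have hker : m • (⊤ : Submodule A P) ≤ LinearMap.ker f := Submodule.smul_le.2 fun a ha x _ ↦ by
    rw [LinearMap.mem_ker, map_smul, Algebra.smul_def, Ideal.Quotient.algebraMap_eq,
      Ideal.Quotient.eq_zero_iff_mem.2 ha, zero_mul]
  exact hf (LinearMap.ker_eq_top.1 (top_le_iff.1 (htop ▸ hker)))

lemma faithfullyFlat_adicCompletion_prod_away {A : Type*} [CommRing A] [IsNoetherianRing A]
    (π : A) :
    Module.FaithfullyFlat A (AdicCompletion (Ideal.span {π}) A × Localization.Away π) := by
  have := flat_prod A (AdicCompletion (Ideal.span {π}) A) (Localization.Away π)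
  refine faithfullyFlat_of_exists_ne_zero fun m hm ↦ ?_
  by_cases hπ : π ∈ m
  · let φ : AdicCompletion (Ideal.span {π}) A →ₐ[A] A ⧸ m :=
      (Ideal.Quotient.factorₐ A ((Ideal.span_singleton_le_iff_mem m).2 hπ)).comp
        (AdicCompletion.evalOneₐ (Ideal.span {π}))
    exact ⟨φ.toLinearMap ∘ₗ LinearMap.fst A _ _, fun h ↦ one_ne_zero (α := A ⧸ m) <| by
      simpa using LinearMap.congr_fun h (1, 0)⟩
  · let := Ideal.Quotient.field m
    have hunit : IsUnit (Algebra.ofId A (A ⧸ m) π) :=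
      IsUnit.mk0 _ fun h ↦ hπ (Ideal.Quotient.eq_zero_iff_mem.1 h)
    let φ : Localization.Away π →ₐ[A] A ⧸ m := IsLocalization.Away.liftAlgHom π hunit
    exact ⟨φ.toLinearMap ∘ₗ LinearMap.snd A _ _, fun h ↦ one_ne_zero (α := A ⧸ m) <| by
      simpa using LinearMap.congr_fun h (0, 1)⟩

theorem statement12_general (A : Type*) [CommRing A] [IsNoetherianRing A] (π : A)
    (M : Type*) [AddCommGroup M] [Module A M] :
    (Module.FinitePresentation A M ∧ Module.Projective A M) ↔
      (Module.Finite (Localization.Away π) (LocalizedModule (Submonoid.powers π) M) ∧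
        Module.Projective (Localization.Away π) (LocalizedModule (Submonoid.powers π) M) ∧
        Module.Finite (AdicCompletion (Ideal.span {π}) A)
          ((AdicCompletion (Ideal.span {π}) A) ⊗[A] M) ∧
        Module.Projective (AdicCompletion (Ideal.span {π}) A)
          ((AdicCompletion (Ideal.span {π}) A) ⊗[A] M)) := by
  let Â := AdicCompletion (Ideal.span {π}) A
  let Aπ := Localization.Away π
  let e : Aπ ⊗[A] M ≃ₗ[Aπ] LocalizedModule (Submonoid.powers π) M :=
    (IsLocalizedModule.isBaseChange (Submonoid.powers π) Aπ
      (LocalizedModule.mkLinearMap (Submonoid.powers π) M)).equiv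
  constructor
  · rintro ⟨_, _⟩
    exact ⟨.equiv e, .of_equiv e, inferInstance, inferInstance⟩
  · rintro ⟨_, _, _, _⟩
    have : Module.FaithfullyFlat A (Â × Aπ) := faithfullyFlat_adicCompletion_prod_away π
    have : Module.Finite Aπ (Aπ ⊗[A] M) := .equiv e.symm
    have : Module.Projective Aπ (Aπ ⊗[A] M) := .of_equiv e.symm
    have : Module.Finite A M := finite_of_finite_tensorProduct_prod Â Aπ M
    have : Module.FinitePresentation A M := Module.finitePresentation_of_finite A M
    have : Module.Flat A (Aπ ⊗[A] M) := .trans A Aπ _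
    have : Module.Flat A (Â ⊗[A] M) := .trans A Â _
    have : Module.Flat A M := flat_of_flat_tensorProduct_prod Â Aπ M
    exact ⟨‹_›, Module.Flat.projective_of_finitePresentation⟩

/-- Let `A` be Noetherian, `π ∈ A` a non-zerodivisor, `Â` the `π`-adic
completion. A finitely generated `A`-module `M` is finitely presented and projective (a
vector bundle on `Spec A`) iff `M[1/π]` is finite projective over `A[1/π]` and `M ⊗_A Â` is
finite projective over `Â`. -/
theorem statement12 (A : Type*) [CommRing A] [IsNoetherianRing A]
    (π : A) (hπ : π ∈ nonZeroDivisors A)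
    (M : Type*) [AddCommGroup M] [Module A M] [Module.Finite A M] :
    (Module.FinitePresentation A M ∧ Module.Projective A M) ↔
      (Module.Finite (Localization.Away π) (LocalizedModule (Submonoid.powers π) M) ∧
        Module.Projective (Localization.Away π) (LocalizedModule (Submonoid.powers π) M) ∧
        Module.Finite (AdicCompletion (Ideal.span {π}) A)
          ((AdicCompletion (Ideal.span {π}) A) ⊗[A] M) ∧
        Module.Projective (AdicCompletion (Ideal.span {π}) A)
          ((AdicCompletion (Ideal.span {π}) A) ⊗[A] M)) :=
  statement12_general A π M
end
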